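/- Let a ∈ L^∞(S^{N-1}) (N ≥ 3) and let μ_1(a) = inf over nonzero ψ ∈ H^1(S^{N-1}) of (∫_{S^{N-1}} |∇_{S^{N-1}}ψ|^2 dS − ∫_{S^{N-1}} a ψ^2 dS)/(∫_{S^{N-1}} ψ^2 dS). Then for every t > 0 and every smooth compactly supported u : R^N → R one has ∫_{R^N} (|∇u|^2 − (a(x/|x|)/|x|^2) u^2) G(x,t) dx + ((N-2)/(4t)) ∫_{R^N} u^2 G(x,t) dx ≥ (μ_1(a) + (N-2)^2/4) ∫_{R^N} (u^2/|x|^2) G(x,t) dx. -/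

import Mathlib

open MeasureTheory Real Set Classical

noncomputable section

/-- The heat kernel `G(x,t) = t^{-N/2} exp(-|x|^2/(4t))`. -/
noncomputable def heatKernel (N : ℕ) (x : EuclideanSpace ℝ (Fin N)) (t : ℝ) : ℝ :=
  t ^ (-(N : ℝ) / 2) * Real.exp (-‖x‖ ^ 2 / (4 * t))

/-- Angular extension: `a(x/|x|)` for a function `a` on the unit sphere. -/
noncomputable def angularExt {N : ℕ}
    (a : Metric.sphere (0 : EuclideanSpace ℝ (Fin N)) 1 → ℝ)
    (x : EuclideanSpace ℝ (Fin N)) : ℝ :=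
  if hx : x = 0 then 0
  else a ⟨‖x‖⁻¹ • x, mem_sphere_zero_iff_norm.mpr (norm_smul_inv_norm hx)⟩

/-!
Split `|∇u|²` into the square of the radial derivative and the square of the component tangential to
the spheres, and let the weight be any nonnegative radial function `g(|x|)`. On a ray, expanding
`r ^ (N - 3) (r u' + (N - 2) / 2 * u)² g ≥ 0` and integrating the cross term by parts bounds the
radial part from below by `(N - 2)² / 4` times the Hardy term plus a term in `g'`. On the sphere of
radius `r`, the function `x ↦ u (r x / |x|)` is a competitor in the variational characterization of
`μ₁(a)`, which bounds the tangential part minus the potential from below by `μ₁(a)` times the Hardy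
term. For the heat kernel `g' = -r / (2 t) * g`, so the term in `g'` becomes `(N - 2) / (4 t)` times
the integral of `u² G`.
-/

open Metric (sphere)
open Module (finrank)

section PolarCoordinates

variable {E : Type*} [NormedAddCommGroup E] [NormedSpace ℝ E]

/-- Polar coordinates `(θ, r) ↦ rθ`, the inverse of `homeomorphUnitSphereProd` with the origin
adjoined to the codomain. -/
def polarMap (E : Type*) [NormedAddCommGroup E] [NormedSpace ℝ E]
    (p : sphere (0 : E) 1 × Ioi (0 : ℝ)) : E :=
  (p.2 : ℝ) • (p.1 : E)

lemma norm_smul_coe_sphere (θ : sphere (0 : E) 1) {r : ℝ} (hr : 0 ≤ r) : ‖r • (θ : E)‖ = r := by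
  rw [norm_smul, norm_eq_of_mem_sphere, mul_one, norm_of_nonneg hr]

variable [MeasurableSpace E] [BorelSpace E]

lemma measurableEmbedding_polarMap : MeasurableEmbedding (polarMap E) :=
  (MeasurableEmbedding.subtype_coe (measurableSet_singleton (0 : E)).compl).comp
    (homeomorphUnitSphereProd E).symm.measurableEmbedding

variable [FiniteDimensional ℝ E] [Nontrivial E] {μ : Measure E} [μ.IsAddHaarMeasure]

lemma measurePreserving_polarMap :
    MeasurePreserving (polarMap E) (μ.toSphere.prod (.volumeIoiPow (finrank ℝ E - 1))) μ := by
  have polar := MeasurePreserving.symm (homeomorphUnitSphereProd E).toMeasurableEquiv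
    μ.measurePreserving_homeomorphUnitSphereProd
  have incl : MeasurePreserving ((↑) : ({0}ᶜ : Set E) → E) (μ.comap (↑)) μ :=
    ⟨measurable_subtype_coe, by
      rw [map_comap_subtype_coe (measurableSet_singleton _).compl, restrict_compl_singleton]⟩
  exact incl.comp polar

lemma integral_volumeIoiPow {F : Type*} [NormedAddCommGroup F] [NormedSpace ℝ F]
    (n : ℕ) (f : ℝ → F) :
    ∫ r : Ioi (0 : ℝ), f r ∂Measure.volumeIoiPow n = ∫ r in Ioi (0 : ℝ), r ^ n • f r := by
  have hmeas : Measurable fun r : Ioi (0 : ℝ) ↦ ((r : ℝ) ^ n).toNNReal :=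
    (measurable_subtype_coe.pow_const n).real_toNNReal
  rw [Measure.volumeIoiPow]
  simp only [ENNReal.ofReal]
  rw [integral_withDensity_eq_integral_smul hmeas,
    integral_subtype_comap measurableSet_Ioi fun r ↦ (r ^ n).toNNReal • f r]
  refine setIntegral_congr_fun measurableSet_Ioi fun r hr ↦ ?_
  rw [NNReal.smul_def, Real.coe_toNNReal _ (pow_nonneg (le_of_lt hr) n)]

variable {f₁ f₂ : E → ℝ}

lemma integral_mono_of_rays (hf₁ : Integrable f₁ μ) (hf₂ : Integrable f₂ μ)
    (h : ∀ θ : sphere (0 : E) 1,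
      ∫ r in Ioi (0 : ℝ), r ^ (finrank ℝ E - 1) * f₁ (r • (θ : E)) ≤
        ∫ r in Ioi (0 : ℝ), r ^ (finrank ℝ E - 1) * f₂ (r • (θ : E))) :
    ∫ x, f₁ x ∂μ ≤ ∫ x, f₂ x ∂μ := by
  have polar := measurePreserving_polarMap (μ := μ)
  have emb := measurableEmbedding_polarMap (E := E)
  have hp₁ : Integrable (fun p ↦ f₁ (polarMap E p)) _ := (polar.integrable_comp_emb emb).2 hf₁
  have hp₂ : Integrable (fun p ↦ f₂ (polarMap E p)) _ := (polar.integrable_comp_emb emb).2 hf₂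
  rw [← polar.integral_comp emb, ← polar.integral_comp emb, integral_prod _ hp₁,
    integral_prod _ hp₂]
  refine integral_mono hp₁.integral_prod_left hp₂.integral_prod_left fun θ ↦ ?_
  exact (integral_volumeIoiPow _ fun r ↦ f₁ (r • (θ : E))).trans_le <|
    (h θ).trans_eq (integral_volumeIoiPow _ fun r ↦ f₂ (r • (θ : E))).symm

lemma integral_mono_of_spheres (hf₁ : Integrable f₁ μ) (hf₂ : Integrable f₂ μ)
    (h : ∀ r > (0 : ℝ), ∫ θ : sphere (0 : E) 1, f₁ (r • (θ : E)) ∂μ.toSphere ≤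
      ∫ θ : sphere (0 : E) 1, f₂ (r • (θ : E)) ∂μ.toSphere) :
    ∫ x, f₁ x ∂μ ≤ ∫ x, f₂ x ∂μ := by
  have polar := measurePreserving_polarMap (μ := μ)
  have emb := measurableEmbedding_polarMap (E := E)
  have hp₁ : Integrable (fun p ↦ f₁ (polarMap E p)) _ := (polar.integrable_comp_emb emb).2 hf₁
  have hp₂ : Integrable (fun p ↦ f₂ (polarMap E p)) _ := (polar.integrable_comp_emb emb).2 hf₂
  rw [← polar.integral_comp emb, ← polar.integral_comp emb, integral_prod_symm _ hp₁,
    integral_prod_symm _ hp₂]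
  exact integral_mono hp₁.integral_prod_right hp₂.integral_prod_right fun r ↦ h r r.2

lemma memLp_top_of_zero_homogeneous {A : E → ℝ} {a : sphere (0 : E) 1 → ℝ}
    (ha : MemLp a ⊤ μ.toSphere)
    (hA : ∀ θ : sphere (0 : E) 1, ∀ r > (0 : ℝ), A (r • (θ : E)) = a θ) :
    MemLp A ⊤ μ := by
  rw [← (measurePreserving_polarMap (μ := μ)).map_eq,
    measurableEmbedding_polarMap.memLp_map_measure_iff]
  have hcomp : A ∘ polarMap E = a ∘ Prod.fst := funext fun p ↦ hA p.1 p.2 p.2.2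
  rw [hcomp]
  refine memLp_top_of_bound (ha.1.comp_quasiMeasurePreserving
    Measure.quasiMeasurePreserving_fst) (lpNorm a ⊤ μ.toSphere) ?_
  exact Measure.quasiMeasurePreserving_fst.ae (ae_le_lpNorm_exponent_top ha)

end PolarCoordinates

section HalfLine

lemma hasDerivAt_pow_mul_sq_mul (n : ℕ) {f g : ℝ → ℝ} {f' g' r : ℝ} (hf : HasDerivAt f f' r)
    (hg : HasDerivAt g g' r) :
    HasDerivAt (fun s ↦ s ^ (n + 1) * (f s ^ 2 * g s))
      ((n + 1) * (r ^ n * (f r ^ 2 * g r)) +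
        r ^ (n + 1) * (2 * f r * f' * g r + f r ^ 2 * g')) r := by
  refine ((hasDerivAt_pow (n + 1) r).mul ((hf.pow 2).mul hg)).congr_deriv ?_
  simp only [Nat.cast_add, Nat.cast_one, add_tsub_cancel_right, Pi.mul_apply, Pi.pow_apply,
    Nat.cast_ofNat, Nat.add_one_sub_one, pow_one]
  ring

lemma integral_Ioi_deriv_pow_mul_sq_mul (n : ℕ) {f g : ℝ → ℝ} (hf : ContDiff ℝ 1 f)
    (hfs : HasCompactSupport f) (hg : ContDiff ℝ 1 g) :
    ∫ r in Ioi (0 : ℝ), deriv (fun s ↦ s ^ (n + 1) * (f s ^ 2 * g s)) r = 0 := by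
  have hfs_sq : HasCompactSupport fun r ↦ f r ^ 2 := hfs.comp_left (g := (· ^ 2)) (by simp)
  have hP : HasCompactSupport fun s ↦ s ^ (n + 1) * (f s ^ 2 * g s) := hfs_sq.mul_right.mul_left
  rw [hP.integral_Ioi_deriv_eq (by fun_prop)]
  simp

lemma integrable_of_eq_zero_of_notMem_tsupport {X : Type*} [TopologicalSpace X]
    [MeasurableSpace X] [OpensMeasurableSpace X] {μ : Measure X} [IsFiniteMeasureOnCompacts μ]
    {f F : X → ℝ} (hf : HasCompactSupport f) (hF : Continuous F) (hFf : ∀ x ∉ tsupport f, F x = 0) :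
    Integrable F μ :=
  hF.integrable_of_hasCompactSupport <| hf.mono' <| Function.support_subset_iff'.2 hFf

lemma weighted_hardy_half_line (n : ℕ) {f g : ℝ → ℝ} (hf : ContDiff ℝ 1 f)
    (hfs : HasCompactSupport f) (hg : ContDiff ℝ 1 g) (hg₀ : ∀ r > 0, 0 ≤ g r) :
    ∫ r in Ioi (0 : ℝ), (((n + 1) / 2) ^ 2 * (r ^ n * (f r ^ 2 * g r)) +
        (n + 1) / 2 * (r ^ (n + 1) * (f r ^ 2 * deriv g r))) ≤
      ∫ r in Ioi (0 : ℝ), r ^ (n + 2) * (deriv f r ^ 2 * g r) := by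
  set k : ℝ := (n + 1) / 2 with hk
  set L : ℝ → ℝ := fun r ↦ k ^ 2 * (r ^ n * (f r ^ 2 * g r)) +
    k * (r ^ (n + 1) * (f r ^ 2 * deriv g r))
  set R : ℝ → ℝ := fun r ↦ r ^ (n + 2) * (deriv f r ^ 2 * g r)
  set P : ℝ → ℝ := fun r ↦ r ^ (n + 1) * (f r ^ 2 * g r)
  have : Continuous (deriv f) := hf.continuous_deriv le_rfl
  have : Continuous (deriv g) := hg.continuous_deriv le_rfl
  have hP : ContDiff ℝ 1 P := by fun_prop
  have hP' (r : ℝ) : deriv P r = (n + 1) * (r ^ n * (f r ^ 2 * g r)) +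
      r ^ (n + 1) * (2 * f r * deriv f r * g r + f r ^ 2 * deriv g r) :=
    (hasDerivAt_pow_mul_sq_mul n (hf.differentiable one_ne_zero r).hasDerivAt
      (hg.differentiable one_ne_zero r).hasDerivAt).deriv
  have hint_P' : ∫ r in Ioi (0 : ℝ), k * deriv P r = 0 := by
    rw [integral_const_mul, integral_Ioi_deriv_pow_mul_sq_mul n hf hfs hg, mul_zero]
  have hL : IntegrableOn L (Ioi 0) :=
    integrable_of_eq_zero_of_notMem_tsupport hfs (by fun_prop) fun r hr ↦ by
      simp [L, image_eq_zero_of_notMem_tsupport hr]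
  have hkP' : IntegrableOn (fun r ↦ k * deriv P r) (Ioi 0) :=
    integrable_of_eq_zero_of_notMem_tsupport hfs (by fun_prop) fun r hr ↦ by
      simp [hP', image_eq_zero_of_notMem_tsupport hr]
  have hR : IntegrableOn R (Ioi 0) :=
    integrable_of_eq_zero_of_notMem_tsupport hfs (by fun_prop) fun r hr ↦ by
      simp [R, image_eq_zero_of_notMem_tsupport (hr <| tsupport_deriv_subset (f := f) ·)]
  -- Subtracting `k` times the derivative of `P`, whose integral vanishes, completes the square.
  calc ∫ r in Ioi (0 : ℝ), L r
    _ = ∫ r in Ioi (0 : ℝ), (L r - k * deriv P r) := by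
      rw [integral_sub hL hkP', hint_P', sub_zero]
    _ ≤ ∫ r in Ioi (0 : ℝ), R r := by
      refine setIntegral_mono_on (hL.sub hkP') hR measurableSet_Ioi fun r hr ↦ sub_nonneg.1 ?_
      have hsq : R r - (L r - k * deriv P r) = r ^ n * (r * deriv f r + k * f r) ^ 2 * g r := by
        simp only [L, R, hP', hk]
        ring
      rw [hsq]
      have hr₀ : 0 < r := hr
      have := hg₀ r hr₀
      positivity

end HalfLine

section PolarGradient

open scoped RealInnerProductSpace

variable {E : Type*} [NormedAddCommGroup E] [InnerProductSpace ℝ E]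

lemma hasFDerivAt_normalize {x : E} (hx : x ≠ 0) :
    HasFDerivAt NormedSpace.normalize
      (‖x‖⁻¹ • (ContinuousLinearMap.id ℝ E -
        (innerSL ℝ (NormedSpace.normalize x)).smulRight (NormedSpace.normalize x))) x := by
  have hnorm : HasFDerivAt (fun y : E ↦ ‖y‖) (innerSL ℝ (NormedSpace.normalize x)) x := by
    have hsq := ((hasStrictFDerivAt_norm_sq x).hasFDerivAt.sqrt (by simpa using hx)).congr_fderiv
      (g' := innerSL ℝ (NormedSpace.normalize x)) <| by
        ext v
        simp only [norm_nonneg, sqrt_sq, one_div, mul_inv_rev, smul_apply, coe_innerSL_apply,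
          nsmul_eq_mul, Nat.cast_ofNat, smul_eq_mul, NormedSpace.normalize, map_smul]
        field_simp
    simpa using hsq
  have hinv := (hasDerivAt_inv (norm_ne_zero_iff.2 hx)).comp_hasFDerivAt x hnorm
  refine (hinv.smul (hasFDerivAt_id x)).congr_fderiv ?_
  ext v
  simp only [Function.comp_apply, NormedSpace.normalize, map_smul, neg_smul, id_eq, add_apply,
    smul_apply, ContinuousLinearMap.id_apply, ContinuousLinearMap.smulRight_apply, neg_apply,
    coe_innerSL_apply, smul_eq_mul, sub_apply]
  module

variable [CompleteSpace E]

/-- The radial derivative `∂u/∂r = ⟪∇u, x/|x|⟫`, with the junk value `0` at the origin. -/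
def radialDeriv (u : E → ℝ) (x : E) : ℝ :=
  ⟪gradient u x, NormedSpace.normalize x⟫

/-- The component of `∇u` orthogonal to `x`, that is, `|x|⁻¹` times the gradient of
`θ ↦ u (|x| θ)` along the unit sphere. -/
def angularGradient (u : E → ℝ) (x : E) : E :=
  gradient u x - radialDeriv u x • NormedSpace.normalize x

lemma norm_sq_angularGradient (u : E → ℝ) (x : E) :
    ‖angularGradient u x‖ ^ 2 = ‖gradient u x‖ ^ 2 - radialDeriv u x ^ 2 := by
  rcases eq_or_ne x 0 with rfl | hx
  · simp [angularGradient, radialDeriv]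
  · rw [angularGradient, norm_sub_sq_real, real_inner_smul_right, norm_smul,
      NormedSpace.norm_normalize hx, ← radialDeriv, mul_one, norm_eq_abs, sq_abs]
    ring

lemma hasDerivAt_ray {u : E → ℝ} {θ : E} {r : ℝ} (hu : DifferentiableAt ℝ u (r • θ))
    (hθ : ‖θ‖ = 1) (hr : 0 < r) :
    HasDerivAt (fun s : ℝ ↦ u (s • θ)) (radialDeriv u (r • θ)) r := by
  have hline : HasDerivAt (fun s : ℝ ↦ s • θ) θ r := by
    simpa using (hasDerivAt_id r).smul_const θ
  refine (hu.hasGradientAt.hasFDerivAt.comp_hasDerivAt r hline).congr_deriv ?_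
  simp [radialDeriv, NormedSpace.normalize_smul_of_pos hr,
    NormedSpace.normalize_eq_self_of_norm_eq_one hθ]

lemma hasGradientAt_comp_normalize {u : E → ℝ} {x : E} (hx : x ≠ 0) {r : ℝ} (hr : 0 < r)
    (hu : DifferentiableAt ℝ u (r • NormedSpace.normalize x)) :
    HasGradientAt (fun y ↦ u (r • NormedSpace.normalize y))
      ((r / ‖x‖) • angularGradient u (r • NormedSpace.normalize x)) x := by
  have hchain := hu.hasGradientAt.hasFDerivAt.comp x ((hasFDerivAt_normalize hx).const_smul r)
  refine hasGradientAt_iff_hasFDerivAt.2 (hchain.congr_fderiv ?_)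
  ext v
  simp only [angularGradient, radialDeriv, NormedSpace.normalize_smul_of_pos hr,
    NormedSpace.normalize_normalize, ContinuousLinearMap.comp_apply, smul_apply, sub_apply,
    ContinuousLinearMap.id_apply, ContinuousLinearMap.smulRight_apply, coe_innerSL_apply, map_smul,
    map_sub, smul_eq_mul, InnerProductSpace.toDual_apply_apply]
  field_simp

lemma continuousOn_gradient {u : E → ℝ} {s : Set E} (hs : IsOpen s) (hu : ContDiffOn ℝ 1 u s) :
    ContinuousOn (gradient u) s :=
  (InnerProductSpace.toDual ℝ E).symm.continuous.comp_continuousOn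
    (hu.continuousOn_fderiv_of_isOpen hs le_rfl)

lemma continuous_gradient {u : E → ℝ} (hu : ContDiff ℝ 1 u) : Continuous (gradient u) :=
  continuousOn_univ.1 (continuousOn_gradient isOpen_univ hu.contDiffOn)

lemma hasCompactSupport_gradient {u : E → ℝ} (hu : HasCompactSupport u) :
    HasCompactSupport (gradient u) :=
  (hu.fderiv (𝕜 := ℝ)).comp_left (map_zero (InnerProductSpace.toDual ℝ E).symm)

end PolarGradient

section AngularEigenvalue

variable {E : Type*} [NormedAddCommGroup E] [InnerProductSpace ℝ E] [FiniteDimensional ℝ E]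
  [MeasurableSpace E]

/-- The quadratic form `∫ |∇ψ|² - a ψ²` of `-Δ - a` on the unit sphere. The full gradient of `ψ`
appears, so this is the intended form only for `ψ` homogeneous of degree zero, whose gradient on the
sphere is tangential. -/
def angularEnergy (μ : Measure E) (a : sphere (0 : E) 1 → ℝ) (ψ : E → ℝ) : ℝ :=
  ∫ θ : sphere (0 : E) 1, (‖gradient ψ (θ : E)‖ ^ 2 - a θ * ψ θ ^ 2) ∂μ.toSphere

/-- The first eigenvalue `μ₁(a)` of `-Δ - a` on the unit sphere, as the infimum of the Rayleigh
quotients of the functions that are homogeneous of degree zero and smooth away from the origin. -/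
def angularEigenvalue (μ : Measure E) (a : sphere (0 : E) 1 → ℝ) : ℝ :=
  sInf {R : ℝ | ∃ ψ : E → ℝ, ContDiffOn ℝ (⊤ : ℕ∞) ψ {0}ᶜ ∧
    (∀ c > (0 : ℝ), ∀ x, ψ (c • x) = ψ x) ∧
    (∫ θ : sphere (0 : E) 1, ψ θ ^ 2 ∂μ.toSphere) ≠ 0 ∧
    R = angularEnergy μ a ψ / ∫ θ : sphere (0 : E) 1, ψ θ ^ 2 ∂μ.toSphere}

variable [BorelSpace E] {μ : Measure E} [μ.IsAddHaarMeasure] {a : sphere (0 : E) 1 → ℝ}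
  {ψ : E → ℝ}

lemma integrable_toSphere_of_continuousOn {f : E → ℝ} (hf : ContinuousOn f {0}ᶜ) :
    Integrable (fun θ : sphere (0 : E) 1 ↦ f θ) μ.toSphere := by
  have hcont : Continuous fun θ : sphere (0 : E) 1 ↦ f θ :=
    hf.comp_continuous continuous_subtype_val fun θ ↦ ne_zero_of_mem_unit_sphere θ
  exact hcont.integrable_of_hasCompactSupport (.of_compactSpace _)

lemma neg_mul_integral_sq_le_angularEnergy (ha : MemLp a ⊤ μ.toSphere)
    (hψ : ContDiffOn ℝ 1 ψ {0}ᶜ) :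
    -lpNorm a ⊤ μ.toSphere * ∫ θ : sphere (0 : E) 1, ψ θ ^ 2 ∂μ.toSphere ≤
      angularEnergy μ a ψ := by
  have hψ_sq : Integrable (fun θ : sphere (0 : E) 1 ↦ ψ θ ^ 2) μ.toSphere :=
    integrable_toSphere_of_continuousOn (hψ.continuousOn.pow 2)
  have hgrad : Integrable (fun θ : sphere (0 : E) 1 ↦ ‖gradient ψ (θ : E)‖ ^ 2) μ.toSphere :=
    integrable_toSphere_of_continuousOn
      ((continuousOn_gradient isOpen_compl_singleton hψ).norm.pow 2)
  rw [angularEnergy, ← integral_const_mul]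
  refine integral_mono_ae (hψ_sq.const_mul _) (hgrad.sub (hψ_sq.mul_of_top_right ha)) ?_
  filter_upwards [ae_le_lpNorm_exponent_top ha] with θ hθ
  have := (abs_le.1 hθ).2
  nlinarith [sq_nonneg (ψ θ), sq_nonneg ‖gradient ψ (θ : E)‖]

lemma angularEigenvalue_mul_integral_sq_le (ha : MemLp a ⊤ μ.toSphere)
    (hψ : ContDiffOn ℝ (⊤ : ℕ∞) ψ {0}ᶜ) (hhom : ∀ c > (0 : ℝ), ∀ x, ψ (c • x) = ψ x) :
    angularEigenvalue μ a * ∫ θ : sphere (0 : E) 1, ψ θ ^ 2 ∂μ.toSphere ≤ angularEnergy μ a ψ := by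
  have energy_ge {φ : E → ℝ} (hφ : ContDiffOn ℝ (⊤ : ℕ∞) φ {0}ᶜ) :=
    neg_mul_integral_sq_le_angularEnergy ha (hφ.of_le (mod_cast le_top))
  have mass_nonneg (φ : E → ℝ) : 0 ≤ ∫ θ : sphere (0 : E) 1, φ θ ^ 2 ∂μ.toSphere :=
    integral_nonneg fun θ ↦ sq_nonneg (φ θ)
  rcases eq_or_ne (∫ θ : sphere (0 : E) 1, ψ θ ^ 2 ∂μ.toSphere) 0 with hmass | hmass
  · simpa [hmass] using energy_ge hψ
  refine (le_div_iff₀ ((mass_nonneg ψ).lt_of_ne' hmass)).1 <|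
    csInf_le ⟨-lpNorm a ⊤ μ.toSphere, ?_⟩ ⟨ψ, hψ, hhom, hmass, rfl⟩
  rintro _ ⟨φ, hφ, -, hφ_mass, rfl⟩
  exact (le_div_iff₀ ((mass_nonneg φ).lt_of_ne' hφ_mass)).2 (energy_ge hφ)

lemma angularEigenvalue_mul_integral_sq_sphere_le (ha : MemLp a ⊤ μ.toSphere) {u : E → ℝ}
    (hu : ContDiff ℝ (⊤ : ℕ∞) u) {r : ℝ} (hr : 0 < r) :
    angularEigenvalue μ a * ∫ θ : sphere (0 : E) 1, u (r • (θ : E)) ^ 2 ∂μ.toSphere ≤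
      ∫ θ : sphere (0 : E) 1, (r ^ 2 * ‖angularGradient u (r • (θ : E))‖ ^ 2 -
        a θ * u (r • (θ : E)) ^ 2) ∂μ.toSphere := by
  set ψ : E → ℝ := fun x ↦ u (r • NormedSpace.normalize x)
  have hψ : ContDiffOn ℝ (⊤ : ℕ∞) ψ {0}ᶜ := by
    refine hu.comp_contDiffOn (contDiffOn_const.smul (.smul (.inv ?_ ?_) contDiffOn_id))
    · exact fun x hx ↦ (contDiffAt_norm ℝ hx).contDiffWithinAt
    · exact fun x hx ↦ norm_ne_zero_iff.2 hx
  have hhom (c : ℝ) (hc : c > 0) (x : E) : ψ (c • x) = ψ x := by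
    simp only [ψ, NormedSpace.normalize_smul_of_pos hc]
  have normalize_coe (θ : sphere (0 : E) 1) : NormedSpace.normalize (θ : E) = θ :=
    NormedSpace.normalize_eq_self_of_norm_eq_one (norm_eq_of_mem_sphere θ)
  have hgrad (θ : sphere (0 : E) 1) :
      ‖gradient ψ (θ : E)‖ ^ 2 = r ^ 2 * ‖angularGradient u (r • (θ : E))‖ ^ 2 := by
    have := hasGradientAt_comp_normalize (ne_zero_of_mem_unit_sphere θ) hr
      (hu.differentiable (by simp) _)
    rw [this.gradient, normalize_coe, norm_eq_of_mem_sphere, div_one, norm_smul, mul_pow,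
      norm_eq_abs, sq_abs]
  simpa only [angularEnergy, hgrad, ψ, normalize_coe] using
    angularEigenvalue_mul_integral_sq_le ha hψ hhom

end AngularEigenvalue

section WeightedHardy

variable {E : Type*} [NormedAddCommGroup E] [InnerProductSpace ℝ E] [FiniteDimensional ℝ E]
  [MeasurableSpace E] [BorelSpace E] {μ : Measure E} [μ.IsAddHaarMeasure] {u : E → ℝ} {g : ℝ → ℝ}

lemma integrable_div_norm_pow_mul {F : E → ℝ} (hF : Continuous F) (hFs : HasCompactSupport F)
    (hg : Continuous g) {k : ℕ} (hk : k < finrank ℝ E) :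
    Integrable (fun x ↦ F x / ‖x‖ ^ k * g ‖x‖) μ := by
  have hsing : LocallyIntegrable (fun x : E ↦ (‖x‖ ^ k)⁻¹) μ := by
    refine locallyIntegrable_of_norm_le_rpow (C := 1) (α := k) (by lia) (mod_cast hk)
      (.of_forall fun x ↦ ?_) (by fun_prop)
    simp [rpow_neg]
  have hFg : Continuous fun x ↦ F x * g ‖x‖ := hF.mul (hg.comp continuous_norm)
  refine (hsing.integrable_smul_left_of_hasCompactSupport hFg hFs.mul_right).congr
    (.of_forall fun x ↦ ?_)
  simp only [smul_eq_mul]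
  ring

lemma integrable_sq_div_norm_sq_mul (hd : 3 ≤ finrank ℝ E) (hu : Continuous u)
    (hus : HasCompactSupport u) (hg : Continuous g) :
    Integrable (fun x ↦ u x ^ 2 / ‖x‖ ^ 2 * g ‖x‖) μ := by
  have hus_sq : HasCompactSupport fun x ↦ u x ^ 2 := hus.comp_left (g := (· ^ 2)) (by simp)
  exact integrable_div_norm_pow_mul (hu.pow 2) hus_sq hg hd

lemma integrable_norm_gradient_sq_mul (hu : ContDiff ℝ 1 u) (hus : HasCompactSupport u)
    (hg : Continuous g) : Integrable (fun x ↦ ‖gradient u x‖ ^ 2 * g ‖x‖) μ := by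
  have hgrad := continuous_gradient hu
  refine Continuous.integrable_of_hasCompactSupport (by fun_prop) (HasCompactSupport.mul_right ?_)
  exact (hasCompactSupport_gradient hus).comp_left (g := fun v ↦ ‖v‖ ^ 2) (by simp)

lemma integrable_radialDeriv_sq_mul (hu : ContDiff ℝ 1 u) (hus : HasCompactSupport u)
    (hg : Continuous g) : Integrable (fun x ↦ radialDeriv u x ^ 2 * g ‖x‖) μ := by
  have hgrad := continuous_gradient hu
  have hmeas : Measurable (radialDeriv u) :=
    hgrad.measurable.inner (measurable_norm.inv.smul measurable_id)
  refine (integrable_norm_gradient_sq_mul hu hus hg).mono (by fun_prop) (.of_forall fun x ↦ ?_)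
  rw [norm_mul, norm_mul, norm_of_nonneg (sq_nonneg _), norm_of_nonneg (sq_nonneg _)]
  refine mul_le_mul_of_nonneg_right ?_ (norm_nonneg _)
  linarith [norm_sq_angularGradient u x, sq_nonneg ‖angularGradient u x‖]

theorem radial_hardy (hd : 3 ≤ finrank ℝ E) (hu : ContDiff ℝ 1 u) (hus : HasCompactSupport u)
    (hg : ContDiff ℝ 1 g) (hg₀ : ∀ r > 0, 0 ≤ g r) :
    (((finrank ℝ E : ℝ) - 2) / 2) ^ 2 * ∫ x, u x ^ 2 / ‖x‖ ^ 2 * g ‖x‖ ∂μ +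
        ((finrank ℝ E : ℝ) - 2) / 2 * ∫ x, u x ^ 2 / ‖x‖ * deriv g ‖x‖ ∂μ ≤
      ∫ x, radialDeriv u x ^ 2 * g ‖x‖ ∂μ := by
  obtain ⟨n, hn⟩ := Nat.exists_eq_add_of_le' hd
  have : Nontrivial E := Module.nontrivial_of_finrank_pos (R := ℝ) (by lia)
  have hus_sq : HasCompactSupport fun x ↦ u x ^ 2 := hus.comp_left (g := (· ^ 2)) (by simp)
  have hint₂ : Integrable (fun x ↦ u x ^ 2 / ‖x‖ ^ 2 * g ‖x‖) μ :=
    integrable_sq_div_norm_sq_mul hd hu.continuous hus hg.continuous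
  have hint₁ : Integrable (fun x ↦ u x ^ 2 / ‖x‖ * deriv g ‖x‖) μ := by
    simpa using integrable_div_norm_pow_mul (by fun_prop) hus_sq (hg.continuous_deriv le_rfl)
      (k := 1) (by lia)
  rw [← integral_const_mul, ← integral_const_mul,
    ← integral_add (hint₂.const_mul _) (hint₁.const_mul _)]
  refine integral_mono_of_rays ((hint₂.const_mul _).add (hint₁.const_mul _))
    (integrable_radialDeriv_sq_mul hu hus hg.continuous) fun θ ↦ ?_
  have hray : ContDiff ℝ 1 fun r : ℝ ↦ u (r • (θ : E)) := by fun_prop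
  have hray_supp : HasCompactSupport fun r : ℝ ↦ u (r • (θ : E)) :=
    hus.comp_isClosedEmbedding (isClosedEmbedding_smul_left (ne_zero_of_mem_unit_sphere θ))
  have hardy := weighted_hardy_half_line n hray hray_supp hg hg₀
  convert! hardy using 1 <;> refine setIntegral_congr_fun measurableSet_Ioi fun r (hr : 0 < r) ↦ ?_
  · simp only [hn, norm_smul_coe_sphere θ hr.le]
    push_cast
    field_simp
    ring
  · have hderiv := hasDerivAt_ray (hu.differentiable one_ne_zero _) (norm_eq_of_mem_sphere θ) hr
    simp only [hn, norm_smul_coe_sphere θ hr.le, hderiv.deriv, Nat.reduceSubDiff]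

variable {a : sphere (0 : E) 1 → ℝ} {A : E → ℝ}

lemma integrable_angular_energy_density (hA : MemLp A ⊤ μ) (hd : 3 ≤ finrank ℝ E)
    (hu : ContDiff ℝ 1 u) (hus : HasCompactSupport u) (hg : Continuous g) :
    Integrable (fun x ↦ (‖angularGradient u x‖ ^ 2 - A x / ‖x‖ ^ 2 * u x ^ 2) * g ‖x‖) μ := by
  have hmass : Integrable (fun x ↦ u x ^ 2 / ‖x‖ ^ 2 * g ‖x‖) μ :=
    integrable_sq_div_norm_sq_mul hd hu.continuous hus hg
  have hsum := ((integrable_norm_gradient_sq_mul hu hus hg).sub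
    (integrable_radialDeriv_sq_mul hu hus hg)).sub (hmass.mul_of_top_right hA)
  refine hsum.congr (.of_forall fun x ↦ ?_)
  simp only [Pi.sub_apply, Pi.mul_apply, norm_sq_angularGradient]
  ring

theorem angular_hardy (hd : 3 ≤ finrank ℝ E) (ha : MemLp a ⊤ μ.toSphere)
    (hA : ∀ θ : sphere (0 : E) 1, ∀ r > (0 : ℝ), A (r • (θ : E)) = a θ)
    (hu : ContDiff ℝ (⊤ : ℕ∞) u) (hus : HasCompactSupport u)
    (hg : Continuous g) (hg₀ : ∀ r > 0, 0 ≤ g r) :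
    angularEigenvalue μ a * ∫ x, u x ^ 2 / ‖x‖ ^ 2 * g ‖x‖ ∂μ ≤
      ∫ x, (‖angularGradient u x‖ ^ 2 - A x / ‖x‖ ^ 2 * u x ^ 2) * g ‖x‖ ∂μ := by
  have : Nontrivial E := Module.nontrivial_of_finrank_pos (R := ℝ) (by lia)
  have hmass : Integrable (fun x ↦ u x ^ 2 / ‖x‖ ^ 2 * g ‖x‖) μ :=
    integrable_sq_div_norm_sq_mul hd hu.continuous hus hg
  rw [← integral_const_mul]
  refine integral_mono_of_spheres (hmass.const_mul _) (integrable_angular_energy_density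
    (memLp_top_of_zero_homogeneous ha hA) hd (hu.of_le (mod_cast le_top)) hus hg) fun r hr ↦ ?_
  have hnorm (θ : sphere (0 : E) 1) := norm_smul_coe_sphere θ hr.le
  calc ∫ θ : sphere (0 : E) 1, angularEigenvalue μ a *
        (u (r • (θ : E)) ^ 2 / ‖r • (θ : E)‖ ^ 2 * g ‖r • (θ : E)‖) ∂μ.toSphere
    _ = g r / r ^ 2 *
        (angularEigenvalue μ a * ∫ θ : sphere (0 : E) 1, u (r • (θ : E)) ^ 2 ∂μ.toSphere) := by
      rw [← integral_const_mul, ← integral_const_mul]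
      refine integral_congr_ae (.of_forall fun θ ↦ ?_)
      simp only [hnorm]
      ring
    _ ≤ g r / r ^ 2 * ∫ θ : sphere (0 : E) 1,
        (r ^ 2 * ‖angularGradient u (r • (θ : E))‖ ^ 2 - a θ * u (r • (θ : E)) ^ 2) ∂μ.toSphere :=
      mul_le_mul_of_nonneg_left (angularEigenvalue_mul_integral_sq_sphere_le ha hu hr)
        (div_nonneg (hg₀ r hr) (sq_nonneg r))
    _ = ∫ θ : sphere (0 : E) 1, (‖angularGradient u (r • (θ : E))‖ ^ 2 -
        A (r • (θ : E)) / ‖r • (θ : E)‖ ^ 2 * u (r • (θ : E)) ^ 2) * g ‖r • (θ : E)‖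
          ∂μ.toSphere := by
      rw [← integral_const_mul]
      refine integral_congr_ae (.of_forall fun θ ↦ ?_)
      simp only [hnorm, hA θ r hr]
      field_simp

theorem anisotropic_parabolic_hardy_general (hd : 3 ≤ finrank ℝ E) (ha : MemLp a ⊤ μ.toSphere)
    (hA : ∀ θ : sphere (0 : E) 1, ∀ r > (0 : ℝ), A (r • (θ : E)) = a θ)
    (hu : ContDiff ℝ (⊤ : ℕ∞) u) (hus : HasCompactSupport u)
    (hg : ContDiff ℝ 1 g) (hg₀ : ∀ r > 0, 0 ≤ g r) :
    (angularEigenvalue μ a + ((finrank ℝ E : ℝ) - 2) ^ 2 / 4) *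
          ∫ x, u x ^ 2 / ‖x‖ ^ 2 * g ‖x‖ ∂μ +
        ((finrank ℝ E : ℝ) - 2) / 2 * ∫ x, u x ^ 2 / ‖x‖ * deriv g ‖x‖ ∂μ ≤
      ∫ x, (‖gradient u x‖ ^ 2 - A x / ‖x‖ ^ 2 * u x ^ 2) * g ‖x‖ ∂μ := by
  have : Nontrivial E := Module.nontrivial_of_finrank_pos (R := ℝ) (by lia)
  have hu₁ : ContDiff ℝ 1 u := hu.of_le (mod_cast le_top)
  have hsplit : ∫ x, (‖gradient u x‖ ^ 2 - A x / ‖x‖ ^ 2 * u x ^ 2) * g ‖x‖ ∂μ =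
      ∫ x, radialDeriv u x ^ 2 * g ‖x‖ ∂μ +
        ∫ x, (‖angularGradient u x‖ ^ 2 - A x / ‖x‖ ^ 2 * u x ^ 2) * g ‖x‖ ∂μ := by
    rw [← integral_add (integrable_radialDeriv_sq_mul hu₁ hus hg.continuous)
      (integrable_angular_energy_density (memLp_top_of_zero_homogeneous ha hA) hd hu₁ hus
        hg.continuous)]
    refine integral_congr_ae (.of_forall fun x ↦ ?_)
    simp only [norm_sq_angularGradient]
    ring
  rw [hsplit]
  linarith [radial_hardy (μ := μ) hd hu₁ hus hg hg₀,
    angular_hardy hd ha hA hu hus hg.continuous hg₀]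

end WeightedHardy

section HeatKernel

variable {N : ℕ}

lemma angularExt_smul (a : sphere (0 : EuclideanSpace ℝ (Fin N)) 1 → ℝ)
    (θ : sphere (0 : EuclideanSpace ℝ (Fin N)) 1) {r : ℝ} (hr : 0 < r) :
    angularExt a (r • (θ : EuclideanSpace ℝ (Fin N))) = a θ := by
  have hne := smul_ne_zero hr.ne' (ne_zero_of_mem_unit_sphere θ)
  rw [angularExt, dif_neg hne]
  congr
  rw [norm_smul_coe_sphere θ hr.le, inv_smul_smul₀ hr.ne']

/-- The radial profile of the heat kernel `G(·, t)` in dimension `N`. -/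
def heatProfile (N : ℕ) (t r : ℝ) : ℝ :=
  t ^ (-(N : ℝ) / 2) * Real.exp (-r ^ 2 / (4 * t))

lemma heatKernel_eq_heatProfile (x : EuclideanSpace ℝ (Fin N)) (t : ℝ) :
    heatKernel N x t = heatProfile N t ‖x‖ :=
  rfl

lemma heatProfile_nonneg (N : ℕ) {t : ℝ} (ht : 0 ≤ t) (r : ℝ) : 0 ≤ heatProfile N t r :=
  mul_nonneg (rpow_nonneg ht _) (exp_nonneg _)

lemma contDiff_heatProfile (N : ℕ) (t : ℝ) : ContDiff ℝ 1 (heatProfile N t) := by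
  unfold heatProfile
  fun_prop

lemma deriv_heatProfile (N : ℕ) (t r : ℝ) :
    deriv (heatProfile N t) r = -(r / (2 * t)) * heatProfile N t r := by
  have hexp : HasDerivAt (fun r ↦ -r ^ 2 / (4 * t)) (-(r / (2 * t))) r := by
    refine ((hasDerivAt_pow 2 r).neg.div_const (4 * t)).congr_deriv ?_
    simp only [Nat.cast_ofNat, Nat.add_one_sub_one, pow_one]
    ring
  refine (hexp.exp.const_mul (t ^ (-(N : ℝ) / 2))).deriv.trans ?_
  rw [heatProfile]
  ring

lemma integral_div_norm_mul_deriv_heatProfile {E : Type*} [NormedAddCommGroup E]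
    [MeasurableSpace E] (μ : Measure E) [NullSingletonClass μ] (N : ℕ) (t : ℝ) (u : E → ℝ) :
    ∫ x, u x / ‖x‖ * deriv (heatProfile N t) ‖x‖ ∂μ =
      -(1 / (2 * t)) * ∫ x, u x * heatProfile N t ‖x‖ ∂μ := by
  rw [← integral_const_mul]
  refine integral_congr_ae ?_
  filter_upwards [compl_mem_ae_iff.2 (measure_singleton (0 : E))] with x hx
  have := norm_ne_zero_iff.2 hx
  rw [deriv_heatProfile]
  field_simp

end HeatKernel

/-- Anisotropic parabolic Hardy inequality.  Here `μ₁` is the first eigenvalue of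
`-Δ_{S^{N-1}} - a`, characterized variationally as the infimum of the Rayleigh quotients
of zero-homogeneous test functions (whose full gradient on the sphere coincides with the
tangential gradient), the sphere carrying the surface measure `volume.toSphere`. -/
theorem anisotropic_parabolic_hardy {N : ℕ} (hN : 3 ≤ N)
    (a : Metric.sphere (0 : EuclideanSpace ℝ (Fin N)) 1 → ℝ)
    (ha_meas : Measurable a) (ha_bdd : ∃ C : ℝ, ∀ θ, |a θ| ≤ C)
    (μ₁ : ℝ)
    (hμ₁ : μ₁ = sInf { R : ℝ | ∃ ψ : EuclideanSpace ℝ (Fin N) → ℝ,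
        ContDiffOn ℝ (⊤ : ℕ∞) ψ {(0 : EuclideanSpace ℝ (Fin N))}ᶜ ∧
        (∀ c > (0 : ℝ), ∀ x, ψ (c • x) = ψ x) ∧
        (∫ θ : Metric.sphere (0 : EuclideanSpace ℝ (Fin N)) 1, (ψ θ) ^ 2
          ∂(volume : Measure (EuclideanSpace ℝ (Fin N))).toSphere) ≠ 0 ∧
        R = (∫ θ : Metric.sphere (0 : EuclideanSpace ℝ (Fin N)) 1,
              (‖gradient ψ (θ : EuclideanSpace ℝ (Fin N))‖ ^ 2 - a θ * (ψ θ) ^ 2)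
              ∂(volume : Measure (EuclideanSpace ℝ (Fin N))).toSphere) /
            ∫ θ : Metric.sphere (0 : EuclideanSpace ℝ (Fin N)) 1, (ψ θ) ^ 2
              ∂(volume : Measure (EuclideanSpace ℝ (Fin N))).toSphere })
    (t : ℝ) (ht : 0 < t)
    (u : EuclideanSpace ℝ (Fin N) → ℝ) (hu : ContDiff ℝ (⊤ : ℕ∞) u)
    (hsupp : HasCompactSupport u) :
    (∫ x, (‖gradient u x‖ ^ 2 - angularExt a x / ‖x‖ ^ 2 * (u x) ^ 2) * heatKernel N x t)
      + (((N : ℝ) - 2) / (4 * t)) * ∫ x, (u x) ^ 2 * heatKernel N x t ≥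
      (μ₁ + ((N : ℝ) - 2) ^ 2 / 4) * ∫ x, (u x) ^ 2 / ‖x‖ ^ 2 * heatKernel N x t := by
  obtain ⟨C, hC⟩ := ha_bdd
  have ha : MemLp a ⊤ (volume : Measure (EuclideanSpace ℝ (Fin N))).toSphere :=
    memLp_top_of_bound ha_meas.aestronglyMeasurable C (.of_forall hC)
  have hardy := anisotropic_parabolic_hardy_general (by simpa using hN) ha
    (fun θ _ ↦ angularExt_smul a θ) hu hsupp (contDiff_heatProfile N t)
    (fun r _ ↦ heatProfile_nonneg N ht.le r)
  have hμ₁' : μ₁ = angularEigenvalue volume a := hμ₁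
  have drift : ((N : ℝ) - 2) / 2 * -(1 / (2 * t)) = -(((N : ℝ) - 2) / (4 * t)) := by ring
  have : NeZero N := ⟨by lia⟩
  rw [integral_div_norm_mul_deriv_heatProfile, finrank_euclideanSpace_fin, ← hμ₁', ← mul_assoc,
    drift] at hardy
  simp only [heatKernel_eq_heatProfile]
  linarith
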